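/- Let X ⊆ ℝ^N be the zero set of a finite system of real polynomial equations. If X is countable, then X is finite. -/

import Mathlib

/-!
Let `I` be the ideal of all polynomials vanishing on `X`, so that `X` is the zero set of `I`. The
proof avoids the finiteness of the number of connected components and uses vector fields instead.

Analytic part: let `v` be a polynomial vector field, viewed as a derivation of `ℝ[x₁, …, x_N]`,
with `v I ⊆ I`. Along an integral curve of `v` starting in `X`, the values of finitely many
generators of `I` solve a homogeneous linear differential equation with initial value zero, so by
Grönwall the curve stays in `X` (`eval_curve_eq_zero`). As `X` is countable, the curve is constant,
so `v` vanishes at every point of `X` (`eval_derivation_eq_zero_of_countable`).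

Algebraic part: let `P` be a minimal prime over `I` and `K` the fraction field of `ℝ[x] / P`. A
nonzero `ℝ`-derivation of `K` would, after clearing denominators (`exists_derivation_of_ne_zero`)
and multiplying by a polynomial lying in all other minimal primes
(`exists_derivation_preserving`), give a vector field preserving `I` with a component outside
`P ⊇ I`, hence nonzero at some point of `X`, contradicting the analytic part. So `K` has no nonzero
derivation, is therefore unramified over `ℝ`, and is finite over `ℝ`. Each coordinate is then
algebraic modulo `P` and takes finitely many values on the zero set of `P`. Finally `X` is covered
by the zero sets of the finitely many minimal primes over `I`.
-/

open MvPolynomial in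
theorem hasDerivAt_eval_curve {N : ℕ}
    (v : Derivation ℝ (MvPolynomial (Fin N) ℝ) (MvPolynomial (Fin N) ℝ))
    {γ : ℝ → Fin N → ℝ} {t : ℝ}
    (hγ : ∀ j, HasDerivAt (fun s => γ s j) (eval (γ t) (v (X j))) t)
    (p : MvPolynomial (Fin N) ℝ) :
    HasDerivAt (fun s => eval (γ s) p) (eval (γ t) (v p)) t := by
  induction p using MvPolynomial.induction_on with
  | C a => simpa [derivation_C] using hasDerivAt_const t a
  | add p q hp hq =>
    simp only [map_add]
    exact hp.add hq
  | mul_X p j hp =>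
    have h := hp.mul (hγ j)
    simp only [Derivation.leibniz, map_add, map_mul, smul_eq_mul, eval_X]
    refine h.congr_deriv ?_
    ring

/-- An integral curve of a polynomial vector field `v` starting on the zero set of an ideal `I` with
`v I ⊆ I` stays in that zero set: the values of finitely many generators of `I` along the
curve solve a homogeneous linear differential equation with initial value zero. -/
theorem eval_curve_eq_zero {N : ℕ} {I : Ideal (MvPolynomial (Fin N) ℝ)}
    (v : Derivation ℝ (MvPolynomial (Fin N) ℝ) (MvPolynomial (Fin N) ℝ))
    (hv : ∀ p ∈ I, v p ∈ I) {γ : ℝ → Fin N → ℝ} {δ : ℝ}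
    (hγ : ∀ t ∈ Set.Icc 0 δ, ∀ j,
      HasDerivAt (fun s => γ s j) (MvPolynomial.eval (γ t) (v (MvPolynomial.X j))) t)
    (h0 : ∀ p ∈ I, MvPolynomial.eval (γ 0) p = 0) :
    ∀ t ∈ Set.Icc 0 δ, ∀ p ∈ I, MvPolynomial.eval (γ t) p = 0 := by
  obtain ⟨s, rfl⟩ : I.FG := IsNoetherian.noetherian I
  have hcoef : ∀ l : s, ∃ h : s → MvPolynomial (Fin N) ℝ,
      ∑ a : s, h a • (a : MvPolynomial (Fin N) ℝ) = v l := fun l =>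
    Submodule.mem_span_finset'.1 (hv l (Submodule.subset_span l.2))
  choose h hh using hcoef
  have hcont : ∀ p, ContinuousOn (fun t => MvPolynomial.eval (γ t) p) (Set.Icc 0 δ) := fun p t ht =>
    (hasDerivAt_eval_curve v (hγ t ht) p).continuousAt.continuousWithinAt
  obtain ⟨K, hK⟩ := isCompact_Icc.exists_bound_of_continuousOn
    (f := fun t => ∑ l : s, ∑ a : s, |MvPolynomial.eval (γ t) (h l a)|) (s := Set.Icc (0 : ℝ) δ)
    (continuousOn_finsetSum _ fun l _ => continuousOn_finsetSum _ fun a _ => (hcont _).abs)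
  have key := eq_zero_of_abs_deriv_le_mul_abs_self_of_eq_zero_right
    (f := fun t (l : s) => MvPolynomial.eval (γ t) (l : MvPolynomial (Fin N) ℝ))
    (f' := fun t (l : s) => MvPolynomial.eval (γ t) (v l)) (K := K) (a := 0) (b := δ)
    (continuousOn_pi.2 fun l => hcont _)
    (fun t ht => hasDerivWithinAt_pi.2 fun l =>
      (hasDerivAt_eval_curve v (hγ t ⟨ht.1, ht.2.le⟩) _).hasDerivWithinAt)
    (funext fun l => h0 _ (Submodule.subset_span l.2))
    (by
      intro t ht
      have hKt := (le_abs_self _).trans (hK t ⟨ht.1, ht.2.le⟩)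
      have hK0 : 0 ≤ K := (norm_nonneg _).trans (hK t ⟨ht.1, ht.2.le⟩)
      refine (pi_norm_le_iff_of_nonneg (by positivity)).2 fun l => ?_
      rw [← hh l]
      simp only [map_sum, smul_eq_mul, map_mul]
      calc _ ≤ ∑ a : s, |MvPolynomial.eval (γ t) (h l a)| *
              ‖fun l : s => MvPolynomial.eval (γ t) (l : MvPolynomial (Fin N) ℝ)‖ := by
            refine (norm_sum_le _ _).trans (Finset.sum_le_sum fun a _ => ?_)
            rw [norm_mul, Real.norm_eq_abs]
            gcongr
            exact norm_le_pi_norm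
              (fun l : s => MvPolynomial.eval (γ t) (l : MvPolynomial (Fin N) ℝ)) a
        _ = (∑ a : s, |MvPolynomial.eval (γ t) (h l a)|) * _ := by rw [Finset.sum_mul]
        _ ≤ _ := by
            gcongr
            refine le_trans ?_ hKt
            exact Finset.single_le_sum
              (f := fun l : s => ∑ a : s, |MvPolynomial.eval (γ t) (h l a)|)
              (fun l _ => Finset.sum_nonneg fun a _ => abs_nonneg _) (Finset.mem_univ l))
  intro t ht p hp
  obtain ⟨f, rfl⟩ := Submodule.mem_span_finset'.1 hp
  have := key t ht
  simp only [map_sum, smul_eq_mul, map_mul]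
  exact Finset.sum_eq_zero fun a _ => by rw [congrFun this a]; simp

/-- A polynomial vector field tangent to a countable real variety vanishes on it, since a
nonconstant integral curve would contribute uncountably many points. -/
theorem eval_derivation_eq_zero_of_countable {N : ℕ} {I : Ideal (MvPolynomial (Fin N) ℝ)}
    (hI : (MvPolynomial.zeroLocus ℝ I).Countable)
    (v : Derivation ℝ (MvPolynomial (Fin N) ℝ) (MvPolynomial (Fin N) ℝ))
    (hv : ∀ p ∈ I, v p ∈ I) {x : Fin N → ℝ} (hx : x ∈ MvPolynomial.zeroLocus ℝ I) (j : Fin N) :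
    MvPolynomial.eval x (v (MvPolynomial.X j)) = 0 := by
  have hsmooth : ContDiffAt ℝ 1
      (fun (y : Fin N → ℝ) i => MvPolynomial.eval y (v (MvPolynomial.X i))) x :=
    contDiffAt_pi.2 fun i =>
      (AnalyticOnNhd.eval_mvPolynomial (v (MvPolynomial.X i)) x (Set.mem_univ x)).contDiffAt
  obtain ⟨γ, hγ0, ε, hε, hγ⟩ :=
    hsmooth.exists_forall_mem_closedBall_exists_eq_forall_mem_Ioo_hasDerivAt₀ 0
  have hδ : (0 : ℝ) < ε / 2 := by positivity
  have hder : ∀ t ∈ Set.Icc 0 (ε / 2), ∀ i, HasDerivAt (fun s => γ s i)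
      (MvPolynomial.eval (γ t) (v (MvPolynomial.X i))) t := fun t ht =>
    hasDerivAt_pi.1 (hγ t ⟨by linarith [ht.1], by linarith [ht.2]⟩)
  have hmem : γ '' Set.Icc 0 (ε / 2) ⊆ MvPolynomial.zeroLocus ℝ I := by
    rintro _ ⟨t, ht, rfl⟩ p hp
    rw [MvPolynomial.aeval_eq_eval]
    refine eval_curve_eq_zero v hv hder (fun q hq => ?_) t ht p hp
    rw [hγ0]
    simpa [MvPolynomial.aeval_eq_eval] using hx q hq
  have hsub : (γ '' Set.Icc 0 (ε / 2)).Subsingleton :=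
    hI.isTotallyDisconnected _ hmem <| isPreconnected_Icc.image _ fun t ht =>
      (hasDerivAt_pi.2 (hder t ht)).continuousAt.continuousWithinAt
  have hmem0 : (0 : ℝ) ∈ Set.Icc 0 (ε / 2) := ⟨le_rfl, hδ.le⟩
  have h1 := (hder 0 hmem0 j).hasDerivWithinAt (s := Set.Icc 0 (ε / 2))
  have h2 : HasDerivWithinAt (fun s => γ s j) 0 (Set.Icc 0 (ε / 2)) 0 :=
    (hasDerivWithinAt_const _ _ (γ 0 j)).congr_of_mem
      (fun t ht => congrFun (hsub ⟨t, ht, rfl⟩ ⟨0, hmem0, rfl⟩) j) hmem0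
  rw [← hγ0]
  exact (uniqueDiffOn_Icc hδ 0 hmem0).eq_deriv _ h1 h2

/-- A finitely generated field extension of `ℝ` without nonzero derivations is finite: its module
of differentials has trivial dual, so it is unramified over `ℝ`. -/
theorem finite_of_derivation_eq_zero {K : Type} [Field K] [Algebra ℝ K]
    [Algebra.EssFiniteType ℝ K] (h : ∀ d : Derivation ℝ K K, d = 0) : Module.Finite ℝ K := by
  have : Algebra.FormallyUnramified ℝ K := by
    refine ⟨subsingleton_of_forall_eq 0 fun ω => ?_⟩
    refine (Module.forall_dual_apply_eq_zero_iff K ω).1 fun φ => ?_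
    have : φ = 0 := (KaehlerDifferential.linearMapEquivDerivation ℝ K).injective (by
      rw [h (KaehlerDifferential.linearMapEquivDerivation ℝ K φ), map_zero])
    simp [this]
  exact Algebra.FormallyUnramified.finite_of_free ℝ K

/-- Clearing denominators: a nonzero derivation of the function field of a prime `P` gives a
polynomial vector field preserving `P` and nonzero modulo `P`. -/
theorem exists_derivation_of_ne_zero {N : ℕ} (P : Ideal (MvPolynomial (Fin N) ℝ)) [P.IsPrime]
    (d : Derivation ℝ (FractionRing (MvPolynomial (Fin N) ℝ ⧸ P))
      (FractionRing (MvPolynomial (Fin N) ℝ ⧸ P))) (hd : d ≠ 0) :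
    ∃ v : Derivation ℝ (MvPolynomial (Fin N) ℝ) (MvPolynomial (Fin N) ℝ),
      (∀ p ∈ P, v p ∈ P) ∧ ∃ j, v (MvPolynomial.X j) ∉ P := by
  set B := MvPolynomial (Fin N) ℝ ⧸ P
  set K := FractionRing B
  let π : MvPolynomial (Fin N) ℝ →ₐ[ℝ] K :=
    (IsScalarTower.toAlgHom ℝ B K).comp (Ideal.Quotient.mkₐ ℝ P)
  have hπ : ∀ p, π p = algebraMap B K (Ideal.Quotient.mk P p) := fun p => rfl
  have hker : ∀ p, π p = 0 ↔ p ∈ P := fun p => by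
    rw [hπ, IsFractionRing.to_map_eq_zero_iff, Ideal.Quotient.eq_zero_iff_mem]
  obtain ⟨b, hb⟩ := IsLocalization.exist_integer_multiples_of_finite (nonZeroDivisors B)
    (fun j : Fin N => d (π (MvPolynomial.X j)))
  have hw : ∀ j, ∃ w, π w = algebraMap B K b * d (π (MvPolynomial.X j)) := fun j => by
    obtain ⟨c, hc⟩ := hb j
    obtain ⟨w, rfl⟩ := Ideal.Quotient.mk_surjective c
    exact ⟨w, by rw [hπ, hc, Algebra.smul_def]⟩
  choose w hw using hw
  have hb0 : algebraMap B K b ≠ 0 := IsFractionRing.to_map_ne_zero_of_mem_nonZeroDivisors b.2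
  let v := MvPolynomial.mkDerivation ℝ w
  have hv : ∀ p, π (v p) = algebraMap B K b * d (π p) := fun p => by
    induction p using MvPolynomial.induction_on with
    | C a =>
      have : π (MvPolynomial.C a) = algebraMap ℝ K a := π.commutes a
      have hda : d (algebraMap ℝ K a) = 0 := d.map_algebraMap a
      simp [this, hda, v, MvPolynomial.derivation_C]
    | add p q hp hq => simp only [map_add, hp, hq, mul_add]
    | mul_X p j hp =>
      have hX : v (MvPolynomial.X j) = w j := MvPolynomial.mkDerivation_X _ _ _
      simp only [Derivation.leibniz, map_add, map_mul, smul_eq_mul, hp, hX, hw]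
      ring
  refine ⟨v, fun p hp => ?_, ?_⟩
  · rw [← hker, hv, (hker p).2 hp, map_zero, mul_zero]
  · by_contra! hX
    have hdp : ∀ p, d (π p) = 0 := fun p => by
      induction p using MvPolynomial.induction_on with
      | C a =>
        have : π (MvPolynomial.C a) = algebraMap ℝ K a := π.commutes a
        rw [this]
        exact d.map_algebraMap a
      | add p q hp hq => simp only [map_add, hp, hq, add_zero]
      | mul_X p j hp =>
        have : d (π (MvPolynomial.X j)) = 0 := by
          have := (hker _).2 (hX j)
          rw [hv] at this
          exact (mul_eq_zero.1 this).resolve_left hb0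
        simp [Derivation.leibniz, hp, this]
    refine hd (Derivation.ext fun z => ?_)
    obtain ⟨y, ⟨c, hc⟩, rfl⟩ := IsLocalization.exists_mk'_eq (nonZeroDivisors B) z
    have hc0 : algebraMap B K c ≠ 0 := IsFractionRing.to_map_ne_zero_of_mem_nonZeroDivisors hc
    obtain ⟨p, rfl⟩ := Ideal.Quotient.mk_surjective y
    obtain ⟨q, rfl⟩ := Ideal.Quotient.mk_surjective c
    rw [IsFractionRing.mk'_eq_div, ← hπ, ← hπ, Derivation.leibniz_div, hdp, hdp]
    simp

/-- Multiplying a vector field preserving a minimal prime `P` over a radical ideal `I` by a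
polynomial in all other minimal primes, but not in `P`, makes it preserve `I`. -/
theorem exists_derivation_preserving {N : ℕ} {I P : Ideal (MvPolynomial (Fin N) ℝ)}
    (hI : I.IsRadical) (hP : P ∈ I.minimalPrimes)
    (v : Derivation ℝ (MvPolynomial (Fin N) ℝ) (MvPolynomial (Fin N) ℝ))
    (hv : ∀ p ∈ P, v p ∈ P) :
    ∃ t, t ∉ P ∧ ∀ p ∈ I, (t • v) p ∈ I := by
  classical
  have hPp : P.IsPrime := hP.1.1
  have hfin := Ideal.finite_minimalPrimes_of_isNoetherianRing _ I
  have hne : ¬ (hfin.toFinset.erase P).inf id ≤ P := fun hle => by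
    obtain ⟨Q, hQ, hQP⟩ := hPp.inf_le'.1 hle
    simp only [Finset.mem_erase, Set.Finite.mem_toFinset, id] at hQ hQP
    exact hQ.1 (le_antisymm hQP (hP.2 hQ.2.1 hQP))
  obtain ⟨t, ht, htP⟩ := SetLike.not_le_iff_exists.1 hne
  refine ⟨t, htP, fun p hp => ?_⟩
  rw [Derivation.smul_apply, smul_eq_mul, ← hI.radical, ← Ideal.sInf_minimalPrimes,
    Ideal.mem_sInf]
  intro Q hQ
  by_cases hQP : Q = P
  · subst hQP
    exact Ideal.mul_mem_left _ _ (hv p (hP.1.2 hp))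
  · refine Ideal.mul_mem_right _ _ ?_
    exact Finset.inf_le (f := id) (by simp [hQ, hQP] : Q ∈ hfin.toFinset.erase P) ht

/-- The function field of each component of a countable variety has no nonzero derivation: such a
derivation would produce a tangent polynomial vector field that is nonzero somewhere on `X`. -/
theorem finite_fractionRing_of_countable {N : ℕ} {X : Set (Fin N → ℝ)}
    (hX : (MvPolynomial.zeroLocus ℝ (MvPolynomial.vanishingIdeal ℝ X)).Countable)
    {P : Ideal (MvPolynomial (Fin N) ℝ)}
    (hP : P ∈ (MvPolynomial.vanishingIdeal ℝ X).minimalPrimes) [P.IsPrime] :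
    Module.Finite ℝ (FractionRing (MvPolynomial (Fin N) ℝ ⧸ P)) := by
  refine finite_of_derivation_eq_zero fun d => ?_
  by_contra hd
  obtain ⟨v, hv, j, hj⟩ := exists_derivation_of_ne_zero P d hd
  have hrad : (MvPolynomial.vanishingIdeal ℝ X).IsRadical := by
    rintro p ⟨n, hn⟩ x hx
    have := hn x hx
    rw [map_pow] at this
    exact eq_zero_of_pow_eq_zero this
  obtain ⟨t, ht, htv⟩ := exists_derivation_preserving hrad hP v hv
  have hmem : (t • v) (MvPolynomial.X j) ∈ MvPolynomial.vanishingIdeal ℝ X := fun x hx => by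
    rw [MvPolynomial.aeval_eq_eval]
    exact eval_derivation_eq_zero_of_countable hX _ htv
      (MvPolynomial.zeroLocus_vanishingIdeal_le X hx) j
  have := hP.1.2 hmem
  rw [Derivation.smul_apply, smul_eq_mul] at this
  exact (Ideal.IsPrime.mem_or_mem ‹_› this).elim ht hj

/-- If the function field of `P` is finite over `ℝ`, each coordinate is algebraic modulo `P`, hence
takes finitely many values on the zero set of `P`. -/
theorem finite_zeroLocus_of_finite_fractionRing {N : ℕ} (P : Ideal (MvPolynomial (Fin N) ℝ))
    [P.IsPrime] [Module.Finite ℝ (FractionRing (MvPolynomial (Fin N) ℝ ⧸ P))] :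
    (MvPolynomial.zeroLocus ℝ P).Finite := by
  set B := MvPolynomial (Fin N) ℝ ⧸ P
  set K := FractionRing B
  let π : MvPolynomial (Fin N) ℝ →ₐ[ℝ] K :=
    (IsScalarTower.toAlgHom ℝ B K).comp (Ideal.Quotient.mkₐ ℝ P)
  let q : Fin N → Polynomial ℝ := fun j => minpoly ℝ (π (MvPolynomial.X j))
  have hq : ∀ j, q j ≠ 0 := fun j => minpoly.ne_zero (Algebra.IsIntegral.isIntegral _)
  have hqP : ∀ j, Polynomial.aeval (MvPolynomial.X j) (q j) ∈ P := fun j => by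
    have h : π (Polynomial.aeval (MvPolynomial.X j) (q j)) = 0 := by
      rw [← Polynomial.aeval_algHom_apply]
      exact minpoly.aeval _ _
    have h' : algebraMap B K (Ideal.Quotient.mk P
      (Polynomial.aeval (MvPolynomial.X j) (q j))) = 0 := h
    rwa [IsFractionRing.to_map_eq_zero_iff, Ideal.Quotient.eq_zero_iff_mem] at h'
  refine (Set.Finite.pi' fun j => (q j).rootSet_finite ℝ).subset fun x hx j => ?_
  refine (Polynomial.mem_rootSet_of_ne (hq j)).2 ?_
  have := hx _ (hqP j)
  rwa [← Polynomial.aeval_algHom_apply, MvPolynomial.aeval_X] at this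

theorem countable_real_variety_finite (N : ℕ) (S : Finset (MvPolynomial (Fin N) ℝ))
    (X : Set (Fin N → ℝ))
    (hX : X = {x | ∀ p ∈ S, MvPolynomial.eval x p = 0})
    (hcount : X.Countable) : X.Finite := by
  have hle : MvPolynomial.zeroLocus ℝ (MvPolynomial.vanishingIdeal ℝ X) ⊆ X := fun x hx => by
    rw [hX]
    intro p hp
    rw [← MvPolynomial.aeval_eq_eval]
    refine hx p fun y hy => ?_
    rw [hX] at hy
    exact hy p hp
  have hfin := Ideal.finite_minimalPrimes_of_isNoetherianRing _ (MvPolynomial.vanishingIdeal ℝ X)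
  refine (hfin.biUnion (t := fun P => MvPolynomial.zeroLocus ℝ P) fun P hP => ?_).subset
    fun x hx => ?_
  · have : P.IsPrime := hP.1.1
    have := finite_fractionRing_of_countable (hcount.mono hle) hP
    exact finite_zeroLocus_of_finite_fractionRing P
  · obtain ⟨P, hP, hPx⟩ := Ideal.exists_minimalPrimes_le
      (I := MvPolynomial.vanishingIdeal ℝ X) (J := MvPolynomial.vanishingIdeal ℝ {x})
      (MvPolynomial.vanishingIdeal_anti_mono (Set.singleton_subset_iff.2 hx))
    exact Set.mem_biUnion hP fun p hp => hPx hp x rfl
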